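/- arXiv:1403.0540 — 2 statements merged into one kernel-verified Lean document; each statement's English description precedes it below -/
import Mathlib

section
/- For even n, the number of F_q-points of the variety attached to the Dynkin tree D_n with generic parameters equals (q^{n/2} - 1)^2, and for odd n with generic parameters it equals q^n - 1. -/
/-!
Fix the unprimed coordinates `x`. A vertex `i` with `x i ≠ 0` then determines `x' i`, while a vertex
with `x i = 0` requires the right-hand side to vanish and leaves `x' i` free, contributing a factor
`q`. The point count is thus a sum over `x` of a product of local weights.

For a path of `m` vertices with an outer left value `a` and an outer right value `γ`, both
invertible, let `T m a` be the resulting count (`pathCount`) and `S m = ∑ a ≠ 0, T m a`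
(`pathTotal`). If the first value of the path is nonzero it plays the role of `a` for the rest of
the path; if it is zero, the second value must be `-a⁻¹`. Hence
`T (m+2) a = S (m+1) + q * T m (-a⁻¹)` (`pathCount_add_two`), and summing over `a` gives
`S (m+2) = (q-1) * S (m+1) + q * S m`, so `(q+1) * S m = q ^ (m+2) - (-1) ^ m`
(`pathTotal_closed`). For even `m` the count `T m a` is independent of `a`; for odd `m` it is
exceptional for one value of `a` only (`pathCount_even`, `pathCount_odd`).

Over `D_{m+3}`, with coefficient `β ≠ 1` on a short leaf, the two short leaves cannot both vanish, as
this would require `x₂ = -1` and `x₂ = -β⁻¹`. The three remaining cases give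
`(q-1) * S (m+1) + q * (q-1) * (T m (-1) + T m (-β⁻¹))` (`natCard_typeD`). In even rank the
remaining genericity conditions say precisely that `-1` and `-β⁻¹` are not the exceptional value of
`T m`. In odd rank the path is taken with `γ = 1`.
-/

open scoped Classical

/-- The Dynkin tree `D_n` on vertices `0, …, n-1`: the two short-branch leaves
`0` and `1` are attached to `2`, and `2 - 3 - ⋯ - (n-1)` is a path. -/
def dynkinD (n : ℕ) : SimpleGraph (Fin n) :=
  SimpleGraph.fromRel (fun i j =>
    (i.val = 0 ∧ j.val = 2) ∨ (i.val = 1 ∧ j.val = 2) ∨ (2 ≤ i.val ∧ j.val = i.val + 1))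

/-! ### Fibres over the unprimed coordinates -/

/-- The number of solutions `x'` of `x * x' = r` over a finite field. -/
noncomputable def fibreCard (F : Type) [Field F] [Fintype F] (x r : F) : ℤ :=
  if x = 0 then (if r = 0 then (Fintype.card F : ℤ) else 0) else 1

section TypeD

set_option linter.unusedSectionVars false

variable {F : Type} [Field F] [Fintype F]

lemma natCard_fibre (x r : F) :
    (Nat.card {y : F // x * y = r} : ℤ) = fibreCard F x r := by
  unfold fibreCard
  split_ifs with hx hr
  · subst hx hr; simp
  · subst hx
    have : IsEmpty {y : F // 0 * y = r} := ⟨fun y => hr (by simpa using y.2.symm)⟩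
    rw [Nat.card_of_isEmpty, Nat.cast_zero]
  · have : Unique {y : F // x * y = r} :=
      { default := ⟨x⁻¹ * r, by field_simp⟩
        uniq := fun y => Subtype.ext ((eq_inv_mul_iff_mul_eq₀ hx).mpr y.2) }
    simp

lemma fibreCard_unit (u : Fˣ) (r : F) : fibreCard F (u : F) r = 1 := by
  simp [fibreCard]

lemma fibreCard_zero (r : F) :
    fibreCard F 0 r = if r = 0 then (Fintype.card F : ℤ) else 0 := by
  simp [fibreCard]

/-- Once `x` is fixed, the equations for the coordinates of `x'` are independent of one another. -/
lemma natCard_eq_sum_prod {n : ℕ} (R : (Fin n → F) → Fin n → F) :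
    (Nat.card {p : (Fin n → F) × (Fin n → F) // ∀ i, p.1 i * p.2 i = R p.1 i} : ℤ)
      = ∑ x : Fin n → F, ∏ i, fibreCard F (x i) (R x i) := by
  let e : {p : (Fin n → F) × (Fin n → F) // ∀ i, p.1 i * p.2 i = R p.1 i} ≃
      (Σ x : Fin n → F, ∀ i, {y : F // x i * y = R x i}) :=
    { toFun := fun p => ⟨p.1.1, fun i => ⟨p.1.2 i, p.2 i⟩⟩
      invFun := fun s => ⟨(s.1, fun i => (s.2 i).1), fun i => (s.2 i).2⟩
      left_inv := fun _ => rfl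
      right_inv := fun _ => rfl }
  rw [Nat.card_congr e, Nat.card_sigma]
  push_cast
  refine Finset.sum_congr rfl fun x _ => ?_
  rw [Nat.card_pi]
  push_cast
  exact Finset.prod_congr rfl fun i _ => natCard_fibre _ _

lemma sum_fin_succ {m : ℕ} (f : (Fin (m + 1) → F) → ℤ) :
    ∑ x, f x = ∑ y : F, ∑ z : Fin m → F, f (Fin.cons y z) := by
  rw [← (Fin.consEquiv (fun _ : Fin (m + 1) => F)).sum_comp, Fintype.sum_prod_type]
  rfl

lemma sum_eq_zero_add_units (f : F → ℤ) : ∑ y, f y = f 0 + ∑ u : Fˣ, f u := by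
  rw [← Finset.add_sum_erase _ _ (Finset.mem_univ (0 : F))]
  congr 1
  symm
  refine Finset.sum_bij (fun u _ => (u : F)) (by simp) (by simp [Units.val_inj]) ?_ (by simp)
  intro b hb
  exact ⟨Units.mk0 b (Finset.ne_of_mem_erase hb), by simp, by simp⟩

/-! ### Path counts and their recursions -/

/-- Weight of a path `x 0 - ⋯ - x m` whose first vertex has an extra left neighbour of value `a`
and whose last vertex has an extra right neighbour of value `γ`. -/
noncomputable def pathWeight (γ : F) (m : ℕ) (a : F) (x : Fin (m + 1) → F) : ℤ :=
  ∏ i : Fin (m + 1), fibreCard F (x i)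
    (1 + (if i.val = 0 then a else x ⟨i.val - 1, by omega⟩) *
      (if h : i.val = m then γ else x ⟨i.val + 1, by omega⟩))

/-- Number of points over a path on `m + 1` vertices, with outer left value `a`, outer right
value `γ`, and value `y` at the first vertex. -/
noncomputable def pathFrom (γ : F) : ℕ → F → F → ℤ
  | 0, a, y => fibreCard F y (1 + a * γ)
  | m + 1, a, y => ∑ z, fibreCard F y (1 + a * z) * pathFrom γ m y z

/-- Number of points over a path on `m` vertices, with outer left value `a` and outer right
value `γ`. -/
noncomputable def pathCount (γ : F) : ℕ → F → ℤ
  | 0, _ => 1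
  | m + 1, a => ∑ y, pathFrom γ m a y

lemma pathWeight_cons (γ : F) (m : ℕ) (a y : F) (x : Fin (m + 1) → F) :
    pathWeight γ (m + 1) a (Fin.cons y x) =
      fibreCard F y (1 + a * x 0) * pathWeight γ m y x := by
  unfold pathWeight
  rw [Fin.prod_univ_succ]
  congr 1
  refine Finset.prod_congr rfl fun i _ => ?_
  have hr : ∀ h : i.val + 1 + 1 < m + 1 + 1,
      (Fin.cons y x : Fin (m + 2) → F) ⟨i.val + 1 + 1, h⟩ = x ⟨i.val + 1, by omega⟩ :=
    fun h => Fin.cons_succ (α := fun _ => F) y x ⟨i.val + 1, by omega⟩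
  have hl : (Fin.cons y x : Fin (m + 2) → F) ⟨i.val, by omega⟩ =
      if i.val = 0 then y else x ⟨i.val - 1, by omega⟩ := by
    rcases i with ⟨_ | k, hk⟩
    · rfl
    · exact Fin.cons_succ (α := fun _ => F) y x ⟨k, by omega⟩
  simp only [Fin.cons_succ, Fin.val_succ, Nat.add_right_cancel_iff, Nat.add_sub_cancel, hl, hr,
    Nat.succ_ne_zero, if_false]

/-- Summing the path weight over all values but the first gives the recursively defined count. -/
lemma sum_pathWeight (γ : F) (m : ℕ) (a y : F) :
    ∑ z : Fin m → F, pathWeight γ m a (Fin.cons y z) = pathFrom γ m a y := by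
  induction m generalizing a y with
  | zero => simp [pathWeight, pathFrom]
  | succ m ih =>
    rw [sum_fin_succ, pathFrom]
    refine Finset.sum_congr rfl fun z _ => ?_
    rw [← ih, Finset.mul_sum]
    refine Finset.sum_congr rfl fun v _ => ?_
    rw [pathWeight_cons, Fin.cons_zero]

/-- An invertible first value imposes no condition on its own vertex. -/
lemma pathFrom_unit (γ : F) (m : ℕ) (a : F) (u : Fˣ) :
    pathFrom γ m a u = pathCount γ m u := by
  cases m <;> simp [pathFrom, pathCount, fibreCard_unit]

/-- A vertex of value `0` forces `1 + b * y` to vanish, hence `y = -b⁻¹`, and leaves its own `x'`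
free. -/
lemma sum_unit_affine (b : Fˣ) (f : F → ℤ) :
    ∑ y, fibreCard F 0 (1 + b * y) * f y = Fintype.card F * f ((-b⁻¹ : Fˣ) : F) := by
  rw [Finset.sum_eq_single (((-b⁻¹ : Fˣ)) : F)]
  · simp [fibreCard]
  · intro y _ hy
    have : 1 + (b : F) * y ≠ 0 := by
      intro h
      apply hy
      have : y = (b : F)⁻¹ * (b * y) := by simp
      rw [this, show (b : F) * y = -1 by linear_combination h]
      simp
    simp [fibreCard, this]
  · simp

/-- Sum of the path counts over all invertible outer left values. -/
noncomputable def pathTotal (γ : F) (m : ℕ) : ℤ := ∑ u : Fˣ, pathCount γ m u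

lemma pathCount_one (γ : F) (a : F) : pathCount γ 1 a =
    pathTotal γ 0 + if 1 + a * γ = 0 then (Fintype.card F : ℤ) else 0 := by
  rw [pathCount, sum_eq_zero_add_units, pathTotal, add_comm]
  simp [pathCount, fibreCard_unit, pathFrom, fibreCard_zero]

/-- Split according to whether the first value vanishes; if it does, the second value must be
`-a⁻¹`. -/
lemma pathCount_add_two (γ : F) (m : ℕ) (a : Fˣ) : pathCount γ (m + 2) a =
    pathTotal γ (m + 1) + Fintype.card F * pathCount γ m ((-a⁻¹ : Fˣ) : F) := by
  rw [pathCount, sum_eq_zero_add_units, pathTotal, add_comm]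
  simp_rw [pathFrom_unit]
  rw [pathFrom, sum_unit_affine a, pathFrom_unit]

/-! ### Closed form of the totals -/

lemma card_units_int : (Fintype.card Fˣ : ℤ) = Fintype.card F - 1 := by
  rw [Fintype.card_units, Nat.cast_sub Fintype.card_pos]; simp

lemma pathTotal_zero (γ : F) : pathTotal γ 0 = Fintype.card F - 1 := by
  simp only [pathTotal, pathCount, Finset.sum_const, Finset.card_univ, nsmul_eq_mul, mul_one]
  exact card_units_int

/-- The involution `u ↦ -u⁻¹` of the group of units. -/
def negInv : Fˣ ≃ Fˣ := (Equiv.inv Fˣ).trans (Equiv.neg Fˣ)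

/-- As `γ` is invertible, exactly one outer left value, `-γ⁻¹`, makes both sides vanish at the single
vertex. -/
lemma pathTotal_one (γ : Fˣ) : pathTotal (γ : F) 1 =
    (Fintype.card F - 1) * pathTotal (γ : F) 0 + Fintype.card F := by
  rw [pathTotal]
  simp_rw [pathCount_one, Finset.sum_add_distrib]
  congr 1
  · simp [← card_units_int]
  · rw [Finset.sum_eq_single (-γ⁻¹)]
    · simp
    · intro b _ hb
      rw [if_neg]
      intro h
      apply hb
      have h2 : b * γ = -1 := by
        ext; push_cast; linear_combination h
      rw [eq_mul_inv_of_mul_eq h2]; simp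
    · simp

/-- Summation of `pathCount_add_two`, reindexed by `u ↦ -u⁻¹`. -/
lemma pathTotal_add_two (γ : F) (m : ℕ) : pathTotal γ (m + 2) =
    (Fintype.card F - 1) * pathTotal γ (m + 1) + Fintype.card F * pathTotal γ m := by
  rw [pathTotal]
  simp_rw [pathCount_add_two, Finset.sum_add_distrib, ← Finset.mul_sum]
  congr 1
  · simp [← card_units_int]
  · congr 1
    exact negInv.sum_comp (fun u : Fˣ => pathCount γ m (u : F))

lemma pathTotal_closed (γ : Fˣ) (m : ℕ) :
    ((Fintype.card F : ℤ) + 1) * pathTotal (γ : F) m =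
      (Fintype.card F : ℤ) ^ (m + 2) - (-1) ^ m := by
  induction m using Nat.strong_induction_on with
  | _ m ih =>
    match m with
    | 0 => rw [pathTotal_zero]; ring
    | 1 => rw [pathTotal_one, pathTotal_zero]; ring
    | m + 2 =>
      rw [pathTotal_add_two]
      linear_combination ((Fintype.card F : ℤ) - 1) * ih (m + 1) (by omega) +
        (Fintype.card F : ℤ) * ih m (by omega)

/-! ### Generic values of the path counts -/

/-- For even length `2 * k` the path count does not depend on the outer values. Its value is stated
in the combination that occurs in the count over `D_{2k+3}`. -/
lemma pathCount_even (γ : Fˣ) (k : ℕ) (a : Fˣ) :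
    ((Fintype.card F : ℤ) - 1) * pathTotal (γ : F) (2 * k + 1) +
      2 * Fintype.card F * ((Fintype.card F : ℤ) - 1) * pathCount (γ : F) (2 * k) a =
      (Fintype.card F : ℤ) ^ (2 * k + 3) - 1 := by
  induction k generalizing a with
  | zero =>
    rw [pathTotal_one, pathTotal_zero, pathCount]; ring
  | succ k ih =>
    have h1 := pathTotal_closed γ (2 * k + 1)
    have h2 := pathTotal_add_two (γ : F) (2 * k + 1)
    have h3 := pathTotal_add_two (γ : F) (2 * k)
    have h4 := pathCount_add_two (γ : F) (2 * k) a
    have h5 := ih (-a⁻¹)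
    have h6 := pathTotal_closed γ (2 * k)
    have hs : (-1 : ℤ) ^ (2 * k) = 1 := by simp
    have hq : (Fintype.card F : ℤ) + 1 ≠ 0 := by positivity
    have hs' : (-1 : ℤ) ^ (2 * k + 1) = -1 := by rw [pow_succ, hs]; ring
    rw [show 2 * (k + 1) + 1 = 2 * k + 1 + 2 by ring, show 2 * (k + 1) = 2 * k + 2 by ring,
      h2, h3, h4]
    rw [hs'] at h1
    rw [hs] at h6
    apply mul_left_cancel₀ hq
    set q := (Fintype.card F : ℤ)
    linear_combination q * (q + 1) * h5 + (q - 1) ^ 2 * q * h6 +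
      ((q - 1) * ((q - 1) ^ 2 + q) + 2 * q * (q - 1) - q * (q - 1)) * h1

/-- For odd length `2 * k + 1` the path count is exceptional at a single outer left value only, which
alternates between `-γ⁻¹` and `γ` since the recursion replaces `a` by `-a⁻¹`. Away from it, the count
has the generic value, stated in the combination that occurs in the count over `D_{2k+4}`. -/
lemma pathCount_odd (γ : Fˣ) (k : ℕ) (a : Fˣ)
    (h0 : Even k → a * γ ≠ -1) (h1 : Odd k → a ≠ γ) :
    ((Fintype.card F : ℤ) - 1) * pathTotal (γ : F) (2 * k + 2) +
      2 * Fintype.card F * ((Fintype.card F : ℤ) - 1) * pathCount (γ : F) (2 * k + 1) a =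
      ((Fintype.card F : ℤ) ^ (k + 2) - 1) ^ 2 := by
  induction k generalizing a with
  | zero =>
    have : 1 + (a : F) * γ ≠ 0 := fun h =>
      h0 (by simp) (by ext; push_cast; linear_combination h)
    rw [pathTotal_add_two, pathTotal_one, pathTotal_zero, pathCount_one, if_neg this,
      pathTotal_zero]
    ring
  | succ k ih =>
    have h2 := pathTotal_closed γ (2 * k + 1)
    have h3 := pathTotal_add_two (γ : F) (2 * k + 2)
    have h4 := pathTotal_add_two (γ : F) (2 * k + 1)
    have h5 := pathCount_add_two (γ : F) (2 * k + 1) a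
    have h6 := pathTotal_closed γ (2 * k + 2)
    have h7 := ih (-a⁻¹)
      (fun hk h => h1 hk.add_one (by
        have h' : a⁻¹ * γ = 1 := by simpa using h
        exact (inv_mul_eq_one.mp h')))
      (fun hk h => h0 hk.add_one (by rw [← h]; simp))
    have hs : (-1 : ℤ) ^ (2 * k) = 1 := by simp
    have hs1 : (-1 : ℤ) ^ (2 * k + 1) = -1 := by rw [pow_succ, hs]; ring
    have hs2 : (-1 : ℤ) ^ (2 * k + 2) = 1 := by rw [pow_add, hs]; ring
    have hq : (Fintype.card F : ℤ) + 1 ≠ 0 := by positivity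
    rw [show 2 * (k + 1) + 2 = 2 * k + 2 + 2 by ring,
      show 2 * (k + 1) + 1 = 2 * k + 1 + 2 by ring, h3, h4, h5]
    rw [hs1] at h2
    rw [hs2] at h6
    apply mul_left_cancel₀ hq
    set q := (Fintype.card F : ℤ)
    linear_combination q * (q + 1) * h7 + (q - 1) ^ 2 * q * h2 +
      ((q - 1) * ((q - 1) ^ 2 + q) + 2 * q * (q - 1) - q * (q - 1)) * h6

/-! ### Decomposition of the variety of type D -/

lemma prod_adj_zero (m : ℕ) (x : Fin (m + 3) → F) :
    ∏ j ∈ Finset.univ.filter (fun j => (dynkinD (m + 3)).Adj ⟨0, by omega⟩ j), x j =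
      x ⟨2, by omega⟩ := by
  rw [show Finset.univ.filter (fun j => (dynkinD (m + 3)).Adj ⟨0, by omega⟩ j) =
    {⟨2, by omega⟩} from ?_, Finset.prod_singleton]
  ext j
  simp only [dynkinD, SimpleGraph.fromRel_adj, ne_eq, Fin.ext_iff, Finset.mem_filter,
    Finset.mem_univ, true_and, Finset.mem_singleton]
  omega

lemma prod_adj_one (m : ℕ) (x : Fin (m + 3) → F) :
    ∏ j ∈ Finset.univ.filter (fun j => (dynkinD (m + 3)).Adj ⟨1, by omega⟩ j), x j =
      x ⟨2, by omega⟩ := by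
  rw [show Finset.univ.filter (fun j => (dynkinD (m + 3)).Adj ⟨1, by omega⟩ j) =
    {⟨2, by omega⟩} from ?_, Finset.prod_singleton]
  ext j
  simp only [dynkinD, SimpleGraph.fromRel_adj, ne_eq, Fin.ext_iff, Finset.mem_filter,
    Finset.mem_univ, true_and, Finset.mem_singleton]
  omega

/-- The neighbour product at the vertex `k + 2`, split into the part on the side of the short leaves
and the part on the other side. -/
lemma prod_adj_add_two (m k : ℕ) (hk : k < m + 1) (x : Fin (m + 3) → F) :
    ∏ j ∈ Finset.univ.filter (fun j => (dynkinD (m + 3)).Adj ⟨k + 2, by omega⟩ j), x j =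
      (if k = 0 then x ⟨0, by omega⟩ * x ⟨1, by omega⟩ else x ⟨k + 1, by omega⟩) *
        (if h : k = m then 1 else x ⟨k + 3, by omega⟩) := by
  have hs : Finset.univ.filter (fun j => (dynkinD (m + 3)).Adj ⟨k + 2, by omega⟩ j) =
      (if k = 0 then {⟨0, by omega⟩, ⟨1, by omega⟩} else {⟨k + 1, by omega⟩}) ∪
        (if h : k = m then ∅ else {⟨k + 3, by omega⟩}) := by
    ext j
    have := j.2
    split_ifs <;>
      simp only [dynkinD, SimpleGraph.fromRel_adj, ne_eq, Fin.ext_iff, Finset.mem_filter,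
        Finset.mem_univ, true_and, Finset.mem_singleton, Finset.mem_insert, Finset.mem_union,
        Finset.notMem_empty, or_false] <;>
      omega
  rw [hs, Finset.prod_union]
  · congr 1
    · split_ifs
      · rw [Finset.prod_pair (by simp)]
      · rw [Finset.prod_singleton]
    · split_ifs <;> simp
  · split_ifs <;> simp

/-- The weight over `D_{m+3}` is that of the two short leaves times that of the path
`2 - 3 - ⋯ - (m+2)`, for which the product `a * b` of the leaf values is the outer left value. -/
lemma prod_typeD_cons (β γ : F) (m : ℕ) (a b : F) (z : Fin (m + 1) → F) :
    ∏ i : Fin (m + 3), fibreCard F ((Fin.cons a (Fin.cons b z) : Fin (m + 3) → F) i)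
      (1 + (if i.val = 1 then β else if i.val = m + 3 - 1 then γ else 1) *
        ∏ j ∈ Finset.univ.filter (fun j => (dynkinD (m + 3)).Adj i j),
          (Fin.cons a (Fin.cons b z) : Fin (m + 3) → F) j) =
    fibreCard F a (1 + z 0) * (fibreCard F b (1 + β * z 0) * pathWeight γ m (a * b) z) := by
  set x : Fin (m + 3) → F := Fin.cons a (Fin.cons b z) with hx
  have hx0 : x ⟨0, by omega⟩ = a := rfl
  have hx1 : x ⟨1, by omega⟩ = b := rfl
  have hx2 : ∀ (k : ℕ) (hk : k + 2 < m + 3), x ⟨k + 2, hk⟩ = z ⟨k, by omega⟩ :=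
    fun k hk => rfl
  rw [Fin.prod_univ_succ, Fin.prod_univ_succ]
  congr 1
  · have := prod_adj_zero m x
    rw [hx2 0] at this
    change fibreCard F a (1 + (if 0 = 1 then β else if 0 = m + 3 - 1 then γ else 1) *
      ∏ j ∈ Finset.univ.filter (fun j => (dynkinD (m + 3)).Adj ⟨0, by omega⟩ j), x j) = _
    rw [this]
    simp
  congr 1
  · have := prod_adj_one m x
    rw [hx2 0] at this
    change fibreCard F b (1 + (if 1 = 1 then β else if 1 = m + 3 - 1 then γ else 1) *
      ∏ j ∈ Finset.univ.filter (fun j => (dynkinD (m + 3)).Adj ⟨1, by omega⟩ j), x j) = _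
    rw [this]
    simp
  · refine Finset.prod_congr rfl fun ⟨k, hk⟩ _ => ?_
    have := prod_adj_add_two m k hk x
    change fibreCard F (z ⟨k, hk⟩)
      (1 + (if k + 2 = 1 then β else if k + 2 = m + 3 - 1 then γ else 1) *
        ∏ j ∈ Finset.univ.filter (fun j => (dynkinD (m + 3)).Adj ⟨k + 2, by omega⟩ j), x j) = _
    rw [this, hx0, hx1]
    congr 2
    rw [mul_left_comm]
    congr 1
    · split_ifs with h
      · rfl
      · obtain ⟨k, rfl⟩ := Nat.exists_eq_succ_of_ne_zero h
        exact hx2 k (by omega)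
    · by_cases h : k = m
      · simp [h]
      · simp only [h, dite_false]
        rw [if_neg (by omega), if_neg (by omega), one_mul]
        exact hx2 (k + 1) (by omega)

/-- The point count over `D_{m+3}`, split according to which of the two short leaves vanishes:
`x₀ = 0` forces `x₂ = -1` and `x₁ = 0` forces `x₂ = -β⁻¹`, so they cannot both vanish. -/
lemma natCard_typeD (β : Fˣ) (hβ : β ≠ 1) (γ : F) (m : ℕ) :
    (Nat.card {p : (Fin (m + 3) → F) × (Fin (m + 3) → F) //
          ∀ i : Fin (m + 3), p.1 i * p.2 i =
            1 + (if i.val = 1 then (β : F) else if i.val = m + 3 - 1 then γ else 1) *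
              ∏ j ∈ Finset.univ.filter (fun j => (dynkinD (m + 3)).Adj i j), p.1 j} : ℤ) =
      (Fintype.card F - 1) * pathTotal γ (m + 1) +
        Fintype.card F * (Fintype.card F - 1) *
          (pathCount γ m ((-1 : Fˣ) : F) + pathCount γ m ((-β⁻¹ : Fˣ) : F)) := by
  have key := natCard_eq_sum_prod (F := F) (n := m + 3) (fun x i =>
    1 + (if i.val = 1 then (β : F) else if i.val = m + 3 - 1 then γ else 1) *
      ∏ j ∈ Finset.univ.filter (fun j => (dynkinD (m + 3)).Adj i j), x j)
  rw [key, sum_fin_succ]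
  simp_rw [sum_fin_succ (F := F) (m := m + 1), prod_typeD_cons, sum_fin_succ (F := F) (m := m),
    Fin.cons_zero, ← Finset.mul_sum, sum_pathWeight]
  -- the four cases, by vanishing of the two short leaves
  have h00 : ∑ y : F, fibreCard F 0 (1 + y) *
      (fibreCard F 0 (1 + β * y) * pathFrom γ m (0 * 0) y) = 0 := by
    have := sum_unit_affine (1 : Fˣ)
      (fun y => fibreCard F 0 (1 + β * y) * pathFrom γ m (0 * 0) y)
    simp only [Units.val_one, one_mul] at this
    rw [this]
    have : 1 + (β : F) * ((-1⁻¹ : Fˣ) : F) ≠ 0 := by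
      intro h
      apply hβ
      ext
      push_cast at h ⊢
      simp at h
      linear_combination -h
    rw [fibreCard_zero, if_neg this]
    simp
  have h01 : ∀ v : Fˣ, ∑ y : F, fibreCard F 0 (1 + y) *
      (fibreCard F v (1 + β * y) * pathFrom γ m (0 * v) y) =
        Fintype.card F * pathCount γ m ((-1 : Fˣ) : F) := by
    intro v
    have := sum_unit_affine (1 : Fˣ)
      (fun y => fibreCard F v (1 + β * y) * pathFrom γ m (0 * v) y)
    simp only [Units.val_one, one_mul] at this
    rw [this, fibreCard_unit, pathFrom_unit, one_mul, inv_one]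
  have h10 : ∀ u : Fˣ, ∑ y : F, fibreCard F u (1 + y) *
      (fibreCard F 0 (1 + β * y) * pathFrom γ m (u * 0) y) =
        Fintype.card F * pathCount γ m ((-β⁻¹ : Fˣ) : F) := by
    intro u
    simp_rw [fibreCard_unit, one_mul]
    rw [sum_unit_affine β, pathFrom_unit]
  have h11 : ∀ u v : Fˣ, ∑ y : F, fibreCard F u (1 + y) *
      (fibreCard F v (1 + β * y) * pathFrom γ m (u * v) y) =
        pathCount γ (m + 1) ((u * v : Fˣ) : F) := by
    intro u v
    simp_rw [fibreCard_unit, one_mul, pathCount, Units.val_mul]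
  have hT : ∀ u : Fˣ, ∑ v : Fˣ, pathCount γ (m + 1) ((u * v : Fˣ) : F) =
      pathTotal γ (m + 1) := fun u =>
    Equiv.sum_comp (Equiv.mulLeft u) (fun w : Fˣ => pathCount γ (m + 1) (w : F))
  rw [sum_eq_zero_add_units, sum_eq_zero_add_units]
  simp_rw [fun u : Fˣ => sum_eq_zero_add_units (F := F) (fun b => ∑ y : F,
    fibreCard F u (1 + y) * (fibreCard F b (1 + β * y) * pathFrom γ m (u * b) y))]
  simp only [h00, h01, h10, h11, hT, Finset.sum_add_distrib, Finset.sum_const, Finset.card_univ,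
    nsmul_eq_mul, card_units_int]
  ring

end TypeD

/-- Number of `F_q`-points of the generic variety attached to `D_n`.

For odd `n`, the canonical coloring of `D_n` has dimension `1`; one generic
invertible coefficient `α` is attached to the uncovered red leaf (vertex `1`),
the genericity condition being `α ≠ 1`; the point count is `q^n - 1`.

For even `n`, `D_n` has dimension `2`; two generic invertible coefficients
`β` (on the leaf `1`) and `γ` (on the leaf `n-1`) are attached to the two red
vertices uncovered by a maximum matching; the genericity conditions coming
from the admissible sets are `β ≠ 1`, `γ ≠ (-1)^{n/2}`, and `β ≠ γ` when
`n ≡ 0 (mod 4)`, `βγ ≠ -1` when `n ≡ 2 (mod 4)`; the point count is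
`(q^{n/2} - 1)^2`. -/
theorem card_typeD_generic (F : Type) [Field F] [Fintype F] (n : ℕ) (h3 : 3 ≤ n) :
    (∀ α : F, Odd n → α ≠ 0 → α ≠ 1 →
      Nat.card {p : (Fin n → F) × (Fin n → F) //
          ∀ i : Fin n, p.1 i * p.2 i =
            1 + (if i.val = 1 then α else 1) *
              ∏ j ∈ Finset.univ.filter (fun j => (dynkinD n).Adj i j), p.1 j}
        = Fintype.card F ^ n - 1) ∧
    (∀ β γ : F, Even n → β ≠ 0 → γ ≠ 0 → β ≠ 1 → γ ≠ (-1 : F) ^ (n / 2) →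
      (n % 4 = 0 → β ≠ γ) → (n % 4 = 2 → β * γ ≠ -1) →
      Nat.card {p : (Fin n → F) × (Fin n → F) //
          ∀ i : Fin n, p.1 i * p.2 i =
            1 + (if i.val = 1 then β else if i.val = n - 1 then γ else 1) *
              ∏ j ∈ Finset.univ.filter (fun j => (dynkinD n).Adj i j), p.1 j}
        = (Fintype.card F ^ (n / 2) - 1) ^ 2) := by
  have hq : 1 ≤ Fintype.card F := Fintype.card_pos
  obtain ⟨m, rfl⟩ : ∃ m, n = m + 3 := ⟨n - 3, by omega⟩
  constructor
  · intro α hn hα hα1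
    obtain ⟨k, rfl⟩ : ∃ k, m = 2 * k := by
      obtain ⟨c, hc⟩ := hn
      exact ⟨c - 1, by omega⟩
    have key := natCard_typeD (Units.mk0 α hα) (fun h => hα1 (congrArg Units.val h)) (1 : F)
      (2 * k)
    have e1 := pathCount_even (1 : Fˣ) k (-1)
    have e2 := pathCount_even (1 : Fˣ) k (-(Units.mk0 α hα)⁻¹)
    simp only [ite_self, Units.val_mk0] at key
    rw [Units.val_one] at e1 e2
    apply Nat.cast_injective (R := ℤ)
    rw [key, Nat.cast_sub (Nat.one_le_pow _ _ hq), Nat.cast_pow, Nat.cast_one]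
    apply mul_left_cancel₀ (two_ne_zero (α := ℤ))
    linear_combination e1 + e2
  · intro β γ hn hβ hγ hβ1 hγ1 h4 h2
    obtain ⟨k, rfl⟩ : ∃ k, m = 2 * k + 1 := by
      obtain ⟨c, hc⟩ := hn
      exact ⟨c - 2, by omega⟩
    have hk2 : (2 * k + 1 + 3) / 2 = k + 2 := by omega
    rw [hk2] at hγ1 ⊢
    have key := natCard_typeD (Units.mk0 β hβ) (fun h => hβ1 (congrArg Units.val h)) γ
      (2 * k + 1)
    have e1 := pathCount_odd (Units.mk0 γ hγ) k (-1)
      (fun hk h => hγ1 (by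
        have := congrArg Units.val h
        rw [(hk.add even_two).neg_one_pow]
        simpa using this))
      (fun hk h => hγ1 (by
        have := congrArg Units.val h
        rw [(hk.add_even even_two).neg_one_pow]
        simpa using this.symm))
    have e2 := pathCount_odd (Units.mk0 γ hγ) k (-(Units.mk0 β hβ)⁻¹)
      (fun hk h => h4 (by obtain ⟨c, hc⟩ := hk; omega) (by
        have h' : (Units.mk0 β hβ)⁻¹ * Units.mk0 γ hγ = 1 := by simpa using h
        exact congrArg Units.val (inv_mul_eq_one.mp h')))
      (fun hk h => h2 (by obtain ⟨c, hc⟩ := hk; omega) (by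
        have := congrArg Units.val h
        simp only [Units.val_neg, Units.val_inv_eq_inv_val, Units.val_mk0] at this
        rw [← this]
        field_simp))
    simp only [Units.val_mk0] at key
    rw [Units.val_mk0] at e1 e2
    apply Nat.cast_injective (R := ℤ)
    rw [key, Nat.cast_pow, Nat.cast_sub (Nat.one_le_pow _ _ hq), Nat.cast_pow, Nat.cast_one]
    apply mul_left_cancel₀ (two_ne_zero (α := ℤ))
    linear_combination e1 + e2
end

section
/- For a finite tree T, the number of F_q-points of X_T^{versal} equals the sum over independent sets S of T of (q-1)^{t + d - 2|S|} · q^{|S|}, where t is the number of vertices and d the dimension of T; evaluating at q = 1 gives that the Euler characteristic of X_T^{versal} equals the number of maximum independent sets of T. -/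
/-!
Sort the points of the variety by the set `Z` of vertices at which `x_v = 0`. The exchange relation
at a vertex of `Z` forces its neighbours out of `Z` (`zeroSet_indep`), so `Z` is independent. On the
stratum of `Z` the variables `x_v'` are free for `v ∈ Z` and determined for `v ∉ Z`, and the
remaining nonzero variables, `x_v` for `v ∉ Z` and `α_v` for uncovered `v`, are subject to the
equations `α_v ∏_{u ~ v} x_u = -1` for `v ∈ Z` (`card_stratum`).

The left sides of these equations define a homomorphism from a torus of rank `t - |Z| + d` to one of
rank `|Z|`. It is surjective (`monomialHom_surjective`): an uncovered `v` has its own `α_v`, and for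
the covered ones the adjacency between vertices of `Z` and their matching partners is triangular in
a suitable order, because the graph is a tree (`exists_private_partner`). Hence the stratum has
`(q - 1)^(t + d - 2|Z|) q^|Z|` points.

For the second claim, a matching edge meets an independent set at most once, so `2|S| ≤ t + d`, and
König's theorem for trees (`exists_indep_add_matching`) shows that the bound is attained.
-/

open scoped Classical

/-- A matching of a graph `G`: a set of edges of `G`, pairwise vertex-disjoint. -/
def IsMatching {V : Type} (G : SimpleGraph V) (M : Finset (Sym2 V)) : Prop :=
  (∀ e ∈ M, e ∈ G.edgeSet) ∧
  ∀ e ∈ M, ∀ f ∈ M, e ≠ f → ∀ v : V, v ∈ e → v ∉ f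

/-- A vertex is covered by a matching if it belongs to some edge of it. -/
def Covers {V : Type} (M : Finset (Sym2 V)) (v : V) : Prop := ∃ e ∈ M, v ∈ e

/-- A maximum matching: a matching of maximal cardinality. -/
def IsMaxMatching {V : Type} [Fintype V] (G : SimpleGraph V) (M : Finset (Sym2 V)) : Prop :=
  IsMatching G M ∧ ∀ M' : Finset (Sym2 V), IsMatching G M' → M'.card ≤ M.card

/-- The versal variety `X_T^{versal}`: cluster variables `x_v, x_v'` and
invertible coefficient variables `α_v` (equal to `1` on vertices covered by the
maximum matching `M`), with the exchange relations. -/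
def VersalVariety {V : Type} [Fintype V] (G : SimpleGraph V) (M : Finset (Sym2 V))
    (k : Type) [Field k] : Type :=
  {p : (V → k) × (V → k) × (V → k) //
    (∀ v : V, p.2.2 v ≠ 0) ∧
    (∀ v : V, Covers M v → p.2.2 v = 1) ∧
    (∀ v : V, p.1 v * p.2.1 v =
      1 + p.2.2 v * ∏ u ∈ Finset.univ.filter (fun u => G.Adj v u), p.1 u)}

/-- The independent sets of a graph `G`, as a finset of finsets. -/
noncomputable def indepSets {V : Type} [Fintype V] [DecidableEq V] (G : SimpleGraph V) :
    Finset (Finset V) :=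
  Finset.univ.filter (fun S : Finset V => ∀ u ∈ S, ∀ v ∈ S, ¬ G.Adj u v)

namespace VersalCount
variable {V : Type} {G : SimpleGraph V}

/-! ### Trees seen from a root -/

/-- In a tree rooted at `r`, every vertex has at most one neighbour closer to the root. -/
theorem parent_unique (hT : G.IsTree) (r : V) {w u₁ u₂ : V} (h₁ : G.Adj w u₁) (h₂ : G.Adj w u₂)
    (d₁ : G.dist r u₁ < G.dist r w) (d₂ : G.dist r u₂ < G.dist r w) : u₁ = u₂ := by
  obtain ⟨p, hp, -⟩ := hT.connected.exists_path_of_dist r w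
  have key : ∀ u, G.Adj w u → G.dist r u < G.dist r w → u = p.penultimate := by
    intro u hu hd
    obtain ⟨q, hq, hql⟩ := hT.connected.exists_path_of_dist r u
    refine hT.isAcyclic.eq_penultimate_of_adj_end hp hu ?_
    apply hT.isAcyclic.mem_support_of_ne_mem_support_of_adj_of_isPath hp hq hu
    intro hw
    have := SimpleGraph.dist_le (q.takeUntil w hw)
    have := q.length_takeUntil_le_length hw
    omega
  rw [key u₁ h₁ d₁, key u₂ h₂ d₂]

/-- A nonempty set `W` of vertices of a tree contains a vertex with at most one neighbour in `W`:
a vertex of `W` furthest from a root, whose neighbours in `W` can only be its parent. -/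
theorem exists_leaf (hT : G.IsTree) (W : Finset V) (hW : W.Nonempty) :
    ∃ w ∈ W, ∀ u₁ ∈ W, ∀ u₂ ∈ W, G.Adj w u₁ → G.Adj w u₂ → u₁ = u₂ := by
  obtain ⟨r⟩ := hT.connected.nonempty
  obtain ⟨w, hw, hmax⟩ := W.exists_max_image (G.dist r) hW
  refine ⟨w, hw, fun u₁ hu₁ u₂ hu₂ h₁ h₂ => parent_unique hT r h₁ h₂ ?_ ?_⟩
  · exact lt_of_le_of_ne (hmax _ hu₁) (hT.dist_ne_of_adj r h₁).symm
  · exact lt_of_le_of_ne (hmax _ hu₂) (hT.dist_ne_of_adj r h₂).symm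

/-- If `m` matches the vertices of `Z` injectively to neighbours, then some partner `m v` has `v` as
its only neighbour in `Z`. Root the tree. If some vertex is matched to a child, the deepest such
vertex works; otherwise every vertex is matched to its parent, and the shallowest one works. -/
theorem exists_private_partner (hT : G.IsTree) (Z : Finset V) (hZ : Z.Nonempty) (m : V → V)
    (hadj : ∀ v ∈ Z, G.Adj v (m v)) (hinj : Set.InjOn m Z) :
    ∃ v ∈ Z, ∀ v' ∈ Z, G.Adj v' (m v) → v' = v := by
  obtain ⟨r⟩ := hT.connected.nonempty
  -- A second neighbour of `m v` in `Z` matched to its own parent lies above `m v`: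
  -- otherwise `m v` would be that parent, against injectivity.
  have step : ∀ v ∈ Z, ∀ v' ∈ Z, G.Adj v' (m v) → v' ≠ v →
      G.dist r (m v') < G.dist r v' → G.dist r v' < G.dist r (m v) := by
    intro v hv v' hv' h hne hup
    by_contra hlt
    have hlt' := lt_of_le_of_ne (not_lt.1 hlt) (hT.dist_ne_of_adj r h).symm
    exact hne (hinj hv' hv (parent_unique hT r (hadj v' hv') h hup hlt'))
  by_cases hD : (Z.filter fun v => G.dist r v < G.dist r (m v)).Nonempty
  · obtain ⟨v, hv, hmax⟩ := Finset.exists_max_image _ (G.dist r) hD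
    rw [Finset.mem_filter] at hv
    refine ⟨v, hv.1, fun v' hv' h => ?_⟩
    by_contra hne
    have hgt : G.dist r (m v) < G.dist r v' := by
      by_contra hle
      have hlt := lt_of_le_of_ne (not_lt.1 hle) (hT.dist_ne_of_adj r h)
      exact hne (parent_unique hT r h.symm (hadj v hv.1).symm hlt hv.2)
    by_cases hdown : G.dist r v' < G.dist r (m v')
    · have := hmax v' (Finset.mem_filter.2 ⟨hv', hdown⟩)
      omega
    · have := step v hv.1 v' hv' h hne
        (lt_of_le_of_ne (not_lt.1 hdown) (hT.dist_ne_of_adj r (hadj v' hv')).symm)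
      omega
  · have hup : ∀ v ∈ Z, G.dist r (m v) < G.dist r v := fun v hv =>
      lt_of_le_of_ne (not_lt.1 fun h => hD ⟨v, Finset.mem_filter.2 ⟨hv, h⟩⟩)
        (hT.dist_ne_of_adj r (hadj v hv)).symm
    obtain ⟨v, hv, hmin⟩ := Finset.exists_min_image _ (G.dist r) hZ
    refine ⟨v, hv, fun v' hv' h => ?_⟩
    by_contra hne
    have h1 := step v hv v' hv' h hne (hup v' hv')
    have h2 := hup v hv
    have h3 := hmin v' hv'
    omega

/-- The multiplicative system `∏_{u ~ v} x u = y v`, `v ∈ Z`, is solvable when `Z` is matched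
injectively into its neighbours: `exists_private_partner` makes the system triangular. -/
theorem exists_prod_neighbors_eq [Fintype V] (hT : G.IsTree) {A : Type} [CommGroup A]
    (m : V → V) (y : V → A) (Z : Finset V)
    (hadj : ∀ v ∈ Z, G.Adj v (m v)) (hinj : Set.InjOn m Z) :
    ∃ x : V → A, ∀ v ∈ Z, ∏ u ∈ Finset.univ.filter (fun u => G.Adj v u), x u = y v := by
  induction Z using Finset.strongInduction with
  | H Z ih =>
    obtain rfl | hZ := Z.eq_empty_or_nonempty
    · exact ⟨1, by simp⟩
    obtain ⟨v, hv, hpriv⟩ := exists_private_partner hT Z hZ m hadj hinj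
    obtain ⟨x, hx⟩ := ih (Z.erase v) (Finset.erase_ssubset hv)
      (fun u hu => hadj u (Finset.mem_of_mem_erase hu))
      (hinj.mono (by simp))
    have hmem : m v ∈ Finset.univ.filter (fun u => G.Adj v u) := by simpa using hadj v hv
    -- Changing `x` at the private partner `m v` affects the equation at `v` only.
    refine ⟨Function.update x (m v)
      (y v * (∏ u ∈ (Finset.univ.filter fun u => G.Adj v u) \ {m v}, x u)⁻¹), fun v' hv' => ?_⟩
    by_cases hvv : v' = v
    · subst hvv
      rw [Finset.prod_update_of_mem hmem, inv_mul_cancel_right]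
    · have hnot : m v ∉ Finset.univ.filter (fun u => G.Adj v' u) := by
        simpa using fun h => hvv (hpriv v' hv' h)
      rw [Finset.prod_update_of_notMem hnot, hx v' (Finset.mem_erase.2 ⟨hvv, hv'⟩)]

/-! ### Matchings and independent sets -/

/-- König's theorem for vertex subsets of a tree, in the form that the subgraph induced on `W` has
a matching and an independent set with sizes summing to `|W|`. Induction on `W`: put a leaf of `W`
into the independent set and, if it has a neighbour in `W`, the edge joining them into the
matching. -/
theorem exists_indep_add_matching (hT : G.IsTree) (W : Finset V) :
    ∃ (S : Finset V) (M : Finset (Sym2 V)), S ⊆ W ∧ (∀ u ∈ S, ∀ v ∈ S, ¬ G.Adj u v) ∧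
      IsMatching G M ∧ (∀ e ∈ M, ∀ v ∈ e, v ∈ W) ∧ S.card + M.card = W.card := by
  induction W using Finset.strongInduction with
  | H W ih =>
    obtain rfl | hW := W.eq_empty_or_nonempty
    · exact ⟨∅, ∅, by simp [IsMatching]⟩
    obtain ⟨w, hw, hleaf⟩ := exists_leaf hT W hW
    by_cases hu : ∃ u ∈ W, G.Adj w u
    · obtain ⟨u, hu, hwu⟩ := hu
      have huw : u ∈ W.erase w := Finset.mem_erase.2 ⟨hwu.ne', hu⟩
      obtain ⟨S, M, hS, hSi, hM, hMW, hc⟩ := ih ((W.erase w).erase u)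
        ((Finset.erase_ssubset huw).trans (Finset.erase_ssubset hw))
      have hwS : w ∉ S := fun h => by simpa using hS h
      have hnew : ∀ e ∈ M, w ∉ e ∧ u ∉ e := fun e he =>
        ⟨fun h => by simpa using hMW e he w h, fun h => by simpa using hMW e he u h⟩
      have hwM : s(w, u) ∉ M := fun h => (hnew _ h).1 (by simp)
      have hSw : ∀ v ∈ S, ¬ G.Adj w v := fun v hv h => by
        have h1 := hS hv
        simp only [Finset.mem_erase] at h1
        exact h1.1 (hleaf v h1.2.2 u hu h hwu)
      refine ⟨insert w S, insert s(w, u) M, ?_, ?_, ⟨?_, ?_⟩, ?_, ?_⟩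
      · intro a ha
        have := @hS a
        grind
      · intro a ha b hb
        rw [Finset.mem_insert] at ha hb
        rcases ha with rfl | ha <;> rcases hb with rfl | hb
        · exact G.loopless.irrefl _
        · exact hSw b hb
        · exact fun h => hSw a ha h.symm
        · exact hSi a ha b hb
      · intro e he
        rcases Finset.mem_insert.1 he with rfl | he
        · exact hwu
        · exact hM.1 e he
      · intro e he f hf hne v hve hvf
        rcases Finset.mem_insert.1 he with rfl | he' <;>
          rcases Finset.mem_insert.1 hf with rfl | hf'
        · exact hne rfl
        · rcases Sym2.mem_iff.1 hve with rfl | rfl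
          · exact (hnew f hf').1 hvf
          · exact (hnew f hf').2 hvf
        · rcases Sym2.mem_iff.1 hvf with rfl | rfl
          · exact (hnew e he').1 hve
          · exact (hnew e he').2 hve
        · exact hM.2 e he' f hf' hne v hve hvf
      · intro e he v hv
        rcases Finset.mem_insert.1 he with rfl | he
        · rcases Sym2.mem_iff.1 hv with rfl | rfl <;> assumption
        · exact Finset.mem_of_mem_erase (Finset.mem_of_mem_erase (hMW e he v hv))
      · rw [Finset.card_insert_of_notMem hwS, Finset.card_insert_of_notMem hwM]
        rw [← Finset.card_erase_add_one hw, ← Finset.card_erase_add_one huw]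
        omega
    · push Not at hu
      obtain ⟨S, M, hS, hSi, hM, hMW, hc⟩ := ih (W.erase w) (Finset.erase_ssubset hw)
      have hwS : w ∉ S := fun h => by simpa using hS h
      have hSw : ∀ v ∈ S, ¬ G.Adj w v := fun v hv => hu v (Finset.mem_of_mem_erase (hS hv))
      refine ⟨insert w S, M, ?_, ?_, hM, fun e he v hv => Finset.mem_of_mem_erase (hMW e he v hv),
        ?_⟩
      · intro a ha
        have := @hS a
        grind
      · intro a ha b hb
        rw [Finset.mem_insert] at ha hb
        rcases ha with rfl | ha <;> rcases hb with rfl | hb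
        · exact G.loopless.irrefl _
        · exact hSw b hb
        · exact fun h => hSw a ha h.symm
        · exact hSi a ha b hb
      · rw [Finset.card_insert_of_notMem hwS, ← Finset.card_erase_add_one hw]
        omega

theorem card_covered [Fintype V] {M : Finset (Sym2 V)} (hM : IsMatching G M) :
    (Finset.univ.filter (Covers M)).card = 2 * M.card := by
  have : Finset.univ.filter (Covers M) = M.biUnion Sym2.toFinset := by
    ext v; simp [Covers]
  rw [this, Finset.card_biUnion, Finset.sum_const_nat (m := 2), mul_comm]
  · exact fun e he => Sym2.card_toFinset_of_not_isDiag e (G.not_isDiag_of_mem_edgeSet (hM.1 e he))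
  · intro e he f hf hne
    rw [Function.onFun, Finset.disjoint_left]
    intro v hv
    simpa using hM.2 e he f hf hne v (by simpa using hv)

/-- An edge of a matching contains at most one vertex of an independent set. -/
theorem card_indep_covered_le [Fintype V] {M : Finset (Sym2 V)} (hM : IsMatching G M) (S : Finset V)
    (hS : ∀ u ∈ S, ∀ v ∈ S, ¬ G.Adj u v) : (S.filter (Covers M)).card ≤ M.card := by
  have : ∀ v, ∃ e, Covers M v → e ∈ M ∧ v ∈ e := fun v => by
    by_cases h : Covers M v
    · exact h.imp fun e he _ => he
    · exact ⟨s(v, v), fun h' => absurd h' h⟩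
  choose e he using this
  refine Finset.card_le_card_of_injOn e (fun v hv => (he v (Finset.mem_filter.1 hv).2).1) ?_
  intro v hv w hw h
  simp only [Finset.coe_filter, Set.mem_ofPred_eq] at hv hw
  by_contra hne
  have h1 : e v = s(v, w) := (Sym2.mem_and_mem_iff hne).1 ⟨(he v hv.2).2, h ▸ (he w hw.2).2⟩
  have h2 := hM.1 _ (he v hv.2).1
  rw [h1] at h2
  exact hS v hv.1 w hw.1 h2

/-- An independent set has at most `t - |M|` vertices, and `t - 2|M|` vertices are not covered
by `M`. With `d = t - 2|M|` the first bound reads `2|S| ≤ t + d`, so the subtractions in the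
point count do not truncate. -/
theorem exponent_bound [Fintype V] {M : Finset (Sym2 V)} (hM : IsMatching G M) (S : Finset V)
    (hS : ∀ u ∈ S, ∀ v ∈ S, ¬ G.Adj u v) : S.card + M.card ≤ Fintype.card V ∧
      2 * M.card + (Finset.univ.filter (fun v => ¬ Covers M v)).card = Fintype.card V := by
  have h1 := card_covered hM
  have h2 := card_indep_covered_le hM S hS
  have h3 := Finset.card_filter_add_card_filter_not (s := (Finset.univ : Finset V)) (Covers M)
  have h4 := Finset.card_filter_add_card_filter_not (s := S) (Covers M)
  have h5 : (S.filter (fun v => ¬ Covers M v)).card ≤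
      (Finset.univ.filter (fun v => ¬ Covers M v)).card :=
    Finset.card_le_card (Finset.filter_subset_filter _ (Finset.subset_univ _))
  rw [Finset.card_univ] at h3
  omega

/-- The map sending a covered vertex to the other end of its matching edge. -/
theorem exists_partner {M : Finset (Sym2 V)} (hM : IsMatching G M) :
    ∃ m : V → V, (∀ v, Covers M v → G.Adj v (m v)) ∧ Set.InjOn m {v | Covers M v} := by
  have : ∀ v, Covers M v → ∃ u, s(v, u) ∈ M := by
    rintro v ⟨e, he, hv⟩
    obtain ⟨u, rfl⟩ := hv
    exact ⟨u, he⟩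
  choose! m hm using this
  refine ⟨m, fun v hv => hM.1 _ (hm v hv), fun v hv w hw h => ?_⟩
  have heq : s(v, m v) = s(w, m w) := by
    by_contra hne
    exact hM.2 _ (hm v hv) _ (hm w hw) hne (m v) (by simp) (by simp [h])
  rw [h] at heq
  exact Sym2.congr_left.1 heq

/-! ### The monomial homomorphism of a stratum -/

/-- Extension by `1` of a function defined on the vertices satisfying `P`. -/
noncomputable def extendOne {P : V → Prop} {A : Type} [One A] (x : {v // P v} → A) (v : V) : A :=
  if h : P v then x ⟨v, h⟩ else 1

theorem extendOne_of {P : V → Prop} {A : Type} [One A] (x : {v // P v} → A) {v : V} (h : P v) :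
    extendOne x v = x ⟨v, h⟩ := dif_pos h

theorem extendOne_of_not {P : V → Prop} {A : Type} [One A] (x : {v // P v} → A) {v : V}
    (h : ¬ P v) : extendOne x v = 1 := dif_neg h

theorem extendOne_mul {P : V → Prop} {A : Type} [MulOneClass A] (x y : {v // P v} → A) (v : V) :
    extendOne (x * y) v = extendOne x v * extendOne y v := by
  by_cases h : P v <;> simp [extendOne, h]

theorem card_fiber_mul {A B : Type} [Group A] [Group B] (f : A →* B)
    (hf : Function.Surjective f) (b : B) :
    Nat.card {a // f a = b} * Nat.card B = Nat.card A := by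
  have e : Nat.card {a // f a = b} = Nat.card f.ker :=
    Nat.card_congr (MonoidHom.fiberEquivKerOfSurjective hf b)
  rw [e, ← Subgroup.card_mul_index f.ker, Subgroup.index_ker,
    MonoidHom.range_eq_top.2 hf]
  simp

variable [Fintype V]

/-- The torus with coordinates `x_v` for `v ∉ Z` and `α_v` for `v` not covered by `M`, with values
in `A`. -/
abbrev Torus (M : Finset (Sym2 V)) (Z : Finset V) (A : Type) : Type :=
  ({v // v ∉ Z} → A) × ({v // ¬ Covers M v} → A)

/-- The homomorphism whose component at `v ∈ Z` is the monomial `α_v ∏_{u ~ v} x_u`. The absent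
coordinates, `x_u` for `u ∈ Z` and `α_v` for covered `v`, are set to `1`; the former do not matter
when `Z` is independent. -/
noncomputable def monomialHom (G : SimpleGraph V) (M : Finset (Sym2 V)) (Z : Finset V)
    (A : Type) [CommGroup A] : Torus M Z A →* ({v // v ∈ Z} → A) :=
  MonoidHom.mk'
    (fun d v => extendOne d.2 v.1 *
      ∏ u ∈ Finset.univ.filter (fun u => G.Adj v.1 u), extendOne d.1 u)
    (by
      intro a b
      funext v
      simp only [Prod.fst_mul, Prod.snd_mul, extendOne_mul, Finset.prod_mul_distrib, Pi.mul_apply]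
      exact mul_mul_mul_comm _ _ _ _)

theorem monomialHom_apply (M : Finset (Sym2 V)) (Z : Finset V)
    {A : Type} [CommGroup A] (d : Torus M Z A) (v : {v // v ∈ Z}) :
    monomialHom G M Z A d v = extendOne d.2 v.1 *
      ∏ u ∈ Finset.univ.filter (fun u => G.Adj v.1 u), extendOne d.1 u := rfl

/-- The equation at an uncovered vertex of `Z` is solved by its own coefficient `α_v`, those at covered
vertices by `exists_prod_neighbors_eq`. -/
theorem monomialHom_surjective (hT : G.IsTree) {M : Finset (Sym2 V)} (hM : IsMatching G M)
    {Z : Finset V} (hZ : ∀ u ∈ Z, ∀ v ∈ Z, ¬ G.Adj u v) (A : Type) [CommGroup A] :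
    Function.Surjective (monomialHom G M Z A) := by
  intro y
  obtain ⟨m, hadj, hinj⟩ := exists_partner hM
  obtain ⟨x, hx⟩ := exists_prod_neighbors_eq hT m (extendOne y) (Z.filter (Covers M))
    (fun v hv => hadj v (Finset.mem_filter.1 hv).2)
    (hinj.mono fun v hv => (Finset.mem_filter.1 hv).2)
  have hprod : ∀ v ∈ Z, ∏ u ∈ Finset.univ.filter (fun u => G.Adj v u),
      extendOne (fun w : {w // w ∉ Z} => x w) u =
        ∏ u ∈ Finset.univ.filter (fun u => G.Adj v u), x u := by
    intro v hv
    refine Finset.prod_congr rfl fun u hu => ?_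
    have huZ : u ∉ Z := fun h => hZ v hv u h (Finset.mem_filter.1 hu).2
    exact extendOne_of (P := fun v => v ∉ Z) _ huZ
  refine ⟨(fun w => x w, fun v => extendOne y v *
    (∏ u ∈ Finset.univ.filter (fun u => G.Adj v u), x u)⁻¹), ?_⟩
  funext v
  rw [monomialHom_apply, hprod v v.2]
  by_cases hv : Covers M v
  · rw [extendOne_of_not (P := fun v => ¬ Covers M v) _ (not_not.2 hv), one_mul,
      hx v (Finset.mem_filter.2 ⟨v.2, hv⟩),
      extendOne_of y v.2]
  · rw [extendOne_of (P := fun v => ¬ Covers M v) _ hv, inv_mul_cancel_right, extendOne_of y v.2]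

/-! ### Stratification by the vanishing set -/

variable {F : Type} [Field F]

/-- The set of vertices whose cluster variable `x_v` vanishes at the point `p`. -/
noncomputable def zeroSet {M : Finset (Sym2 V)} (p : VersalVariety G M F) : Finset V :=
  Finset.univ.filter fun v => p.1.1 v = 0

theorem mem_zeroSet {M : Finset (Sym2 V)} (p : VersalVariety G M F) (v : V) :
    v ∈ zeroSet p ↔ p.1.1 v = 0 := by simp [zeroSet]

/-- If `x_u = x_v = 0` for an edge `uv`, the exchange relation at `u` reads `0 = 1`. -/
theorem zeroSet_indep {M : Finset (Sym2 V)} (p : VersalVariety G M F) :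
    ∀ u ∈ zeroSet p, ∀ v ∈ zeroSet p, ¬ G.Adj u v := by
  intro u hu v hv h
  rw [mem_zeroSet] at hu hv
  have := p.2.2.2 u
  rw [hu, Finset.prod_eq_zero (i := v) (by simpa using h) hv] at this
  simp at this

theorem prod_eq_coe_extendOne {Z : Finset V}
    (hZ : ∀ u ∈ Z, ∀ v ∈ Z, ¬ G.Adj u v) (a : {v // v ∉ Z} → Fˣ) {v : V} (hv : v ∈ Z)
    (x : V → F) (hx : ∀ u : {v // v ∉ Z}, x u = a u) :
    ∏ u ∈ Finset.univ.filter (fun u => G.Adj v u), x u =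
      ((∏ u ∈ Finset.univ.filter (fun u => G.Adj v u), extendOne a u : Fˣ) : F) := by
  rw [Units.coe_prod]
  refine Finset.prod_congr rfl fun u hu => ?_
  have huZ : u ∉ Z := fun h => hZ v hv u h (Finset.mem_filter.1 hu).2
  rw [extendOne_of (P := fun v => v ∉ Z) _ huZ]
  exact hx ⟨u, huZ⟩

/-- The point with vanishing set `Z` determined by nonzero values `d` of the remaining `x_v` and of
the free coefficients, and by arbitrary values `w` of `x_v'` on `Z`. Off `Z` the value of `x_v'` is
forced by the exchange relation. -/
noncomputable def stratumPoint (M : Finset (Sym2 V)) (Z : Finset V)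
    (d : Torus M Z Fˣ) (w : {v // v ∈ Z} → F) : (V → F) × (V → F) × (V → F) :=
  let x : V → F := fun v => if v ∈ Z then 0 else (extendOne d.1 v : Fˣ)
  let α : V → F := fun v => (extendOne d.2 v : Fˣ)
  (x, fun v => if h : v ∈ Z then w ⟨v, h⟩ else
    (1 + α v * ∏ u ∈ Finset.univ.filter (fun u => G.Adj v u), x u) / x v, α)

/-- Points with vanishing set `Z` correspond to pairs of a solution of `α_v ∏_{u ~ v} x_u = -1`,
`v ∈ Z`, in the torus and an arbitrary choice of `x_v'` for `v ∈ Z`. -/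
theorem card_stratum {M : Finset (Sym2 V)} {Z : Finset V}
    (hZ : ∀ u ∈ Z, ∀ v ∈ Z, ¬ G.Adj u v) :
    Nat.card {p : VersalVariety G M F // zeroSet p = Z} =
      Nat.card {d : Torus M Z Fˣ // monomialHom G M Z Fˣ d = fun _ => -1} *
        Nat.card ({v // v ∈ Z} → F) := by
  rw [← Nat.card_prod]
  have hx : ∀ (d : Torus M Z Fˣ) (w : {v // v ∈ Z} → F) (u : {v // v ∉ Z}),
      (stratumPoint (G := G) M Z d w).1 u = d.1 u := fun d w u => by
    simp [stratumPoint, u.2, extendOne_of (P := fun v => v ∉ Z) _ u.2]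
  have hx0 : ∀ (d : Torus M Z Fˣ) (w : {v // v ∈ Z} → F) (v : V),
      (stratumPoint (G := G) M Z d w).1 v = 0 ↔ v ∈ Z := fun d w v => by
    simp [stratumPoint]
  have hw : ∀ (d : Torus M Z Fˣ) (w : {v // v ∈ Z} → F) (u : {v // v ∈ Z}),
      (stratumPoint (G := G) M Z d w).2.1 u = w u := fun d w u => by
    simp [stratumPoint]
  have hα : ∀ (d : Torus M Z Fˣ) (w : {v // v ∈ Z} → F) (v : V),
      (stratumPoint (G := G) M Z d w).2.2 v = (extendOne d.2 v : Fˣ) := fun d w v => rfl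
  have hmem : ∀ (d : Torus M Z Fˣ) (w : {v // v ∈ Z} → F),
      (monomialHom G M Z Fˣ d = fun _ => -1) →
      let p := stratumPoint (G := G) M Z d w
      (∀ v : V, p.2.2 v ≠ 0) ∧ (∀ v : V, Covers M v → p.2.2 v = 1) ∧
        (∀ v : V, p.1 v * p.2.1 v =
          1 + p.2.2 v * ∏ u ∈ Finset.univ.filter (fun u => G.Adj v u), p.1 u) := by
    intro d w hd p
    refine ⟨fun v => Units.ne_zero _, fun v hv => ?_, fun v => ?_⟩
    · rw [hα, extendOne_of_not (P := fun v => ¬ Covers M v) _ (not_not.2 hv), Units.val_one]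
    · by_cases hv : v ∈ Z
      · rw [(hx0 d w v).2 hv, zero_mul, hα, prod_eq_coe_extendOne hZ d.1 hv _ (hx d w),
          ← Units.val_mul]
        have := congrFun hd ⟨v, hv⟩
        rw [monomialHom_apply] at this
        rw [this]
        simp
      · have h0 : p.1 v ≠ 0 := fun h => hv ((hx0 d w v).1 h)
        have : p.2.1 v =
            (1 + p.2.2 v * ∏ u ∈ Finset.univ.filter (fun u => G.Adj v u), p.1 u) / p.1 v :=
          dif_neg hv
        rw [this, mul_div_cancel₀ _ h0]
  symm
  refine Nat.card_eq_of_bijective (fun q =>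
    ⟨⟨stratumPoint (G := G) M Z q.1.1 q.2, hmem _ _ q.1.2⟩, ?_⟩) ⟨?_, ?_⟩
  · ext v
    exact (mem_zeroSet _ v).trans (hx0 _ _ v)
  · rintro ⟨⟨d, hd⟩, w⟩ ⟨⟨d', hd'⟩, w'⟩ h
    have h' : stratumPoint (G := G) M Z d w = stratumPoint (G := G) M Z d' w' :=
      congrArg (fun z => z.1.1) h
    have e1 : d.1 = d'.1 := by
      funext u
      apply Units.ext
      rw [← hx d w u, ← hx d' w' u, h']
    have e2 : d.2 = d'.2 := by
      funext u
      apply Units.ext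
      have := congrFun (congrArg (fun z : (V → F) × (V → F) × (V → F) => z.2.2) h') u.1
      simp only [hα] at this
      rwa [extendOne_of (P := fun v => ¬ Covers M v) _ u.2,
        extendOne_of (P := fun v => ¬ Covers M v) _ u.2] at this
    have e3 : w = w' := by
      funext u
      rw [← hw d w u, ← hw d' w' u, h']
    obtain rfl : d = d' := Prod.ext e1 e2
    subst e3
    rfl
  · rintro ⟨⟨⟨x, x', α⟩, h1, h2, h3⟩, hp⟩
    have hz : ∀ v, v ∈ Z ↔ x v = 0 := fun v => by
      rw [← hp]
      exact mem_zeroSet _ v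
    simp only at h1 h2 h3
    let d : Torus M Z Fˣ :=
      (fun v => Units.mk0 (x v) fun h => v.2 ((hz v).2 h), fun v => Units.mk0 (α v) (h1 v))
    let w : {v // v ∈ Z} → F := fun v => x' v
    have hαd : ∀ v, ((extendOne d.2 v : Fˣ) : F) = α v := fun v => by
      by_cases hv : Covers M v
      · rw [extendOne_of_not (P := fun v => ¬ Covers M v) _ (not_not.2 hv), h2 v hv, Units.val_one]
      · rw [extendOne_of (P := fun v => ¬ Covers M v) _ hv]; rfl
    have hd : monomialHom G M Z Fˣ d = fun _ => -1 := by
      funext v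
      apply Units.ext
      rw [monomialHom_apply, Units.val_mul, ← prod_eq_coe_extendOne hZ d.1 v.2 x (fun u => rfl),
        hαd]
      have := h3 v
      rw [(hz v).1 v.2, zero_mul] at this
      rw [Units.val_neg, Units.val_one]
      linear_combination -this
    have e1 : (stratumPoint (G := G) M Z d w).1 = x := by
      funext v
      by_cases hv : v ∈ Z
      · rw [(hx0 d w v).2 hv, (hz v).1 hv]
      · exact hx d w ⟨v, hv⟩
    have e3 : (stratumPoint (G := G) M Z d w).2.2 = α := funext hαd
    have e2 : (stratumPoint (G := G) M Z d w).2.1 = x' := by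
      funext v
      by_cases hv : v ∈ Z
      · exact hw d w ⟨v, hv⟩
      · have h0 : x v ≠ 0 := fun h => hv ((hz v).2 h)
        apply mul_left_cancel₀ h0
        have := (hmem d w hd).2.2 v
        simp only [e1, e3] at this
        rw [this, h3]
    refine ⟨(⟨d, hd⟩, w), ?_⟩
    apply Subtype.ext
    apply Subtype.ext
    exact Prod.ext e1 (Prod.ext e2 e3)

/-- The fibre of a surjection from a torus of rank `(t - |Z|) + d` to one of rank `|Z|`, where
`d = t - 2|M|`. -/
theorem card_torus_fiber [Fintype F] (hT : G.IsTree) {M : Finset (Sym2 V)} (hM : IsMatching G M)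
    {Z : Finset V} (hZ : ∀ u ∈ Z, ∀ v ∈ Z, ¬ G.Adj u v) :
    Nat.card {d : Torus M Z Fˣ // monomialHom G M Z Fˣ d = fun _ => -1} =
      (Fintype.card F - 1) ^
        (Fintype.card V + (Fintype.card V - 2 * M.card) - 2 * Z.card) := by
  have h := card_fiber_mul _ (monomialHom_surjective hT hM hZ Fˣ) (fun _ => -1)
  obtain ⟨hb, hc⟩ := exponent_bound hM Z hZ
  have hZc : Fintype.card {v // v ∉ Z} = Fintype.card V - Z.card := by
    rw [Fintype.card_subtype_compl, Fintype.card_coe]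
  have hcov : Fintype.card {v // ¬ Covers M v} = Fintype.card V - 2 * M.card := by
    rw [Fintype.card_subtype]; omega
  simp only [Nat.card_prod, Nat.card_fun, Nat.card_eq_fintype_card (α := Fˣ), Fintype.card_units,
    Nat.card_eq_fintype_card (α := {v // v ∈ Z}), Nat.card_eq_fintype_card (α := {v // v ∉ Z}),
    Nat.card_eq_fintype_card (α := {v // ¬ Covers M v}), Fintype.card_coe, hZc, hcov,
    ← pow_add] at h
  have hq : 0 < Fintype.card F - 1 := by
    have := Fintype.one_lt_card (α := F)
    omega
  apply Nat.eq_of_mul_eq_mul_right (pow_pos hq Z.card)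
  rw [h, ← pow_add]
  congr 1
  omega

/-- The point count, for an arbitrary matching `M`. -/
theorem card_versal [DecidableEq V] [Fintype F] (hT : G.IsTree) {M : Finset (Sym2 V)}
    (hM : IsMatching G M) :
    Nat.card (VersalVariety G M F) = ∑ S ∈ indepSets G,
      (Fintype.card F - 1) ^ (Fintype.card V + (Fintype.card V - 2 * M.card) - 2 * S.card) *
        Fintype.card F ^ S.card := by
  have : Finite (VersalVariety G M F) := Subtype.finite
  have := Fintype.ofFinite (VersalVariety G M F)
  rw [Nat.card_eq_fintype_card, ← Finset.card_univ,
    Finset.card_eq_sum_card_fiberwise (f := zeroSet) (t := indepSets G)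
      (fun p _ => by simpa [indepSets] using zeroSet_indep p)]
  refine Finset.sum_congr rfl fun S hS => ?_
  have hS' : ∀ u ∈ S, ∀ v ∈ S, ¬ G.Adj u v := by simpa [indepSets] using hS
  rw [← Fintype.card_subtype, ← Nat.card_eq_fintype_card, card_stratum hS',
    card_torus_fiber hT hM hS']
  simp

/-- By König, the bound `2|S| ≤ t + d` of `exponent_bound` is attained when `M` is maximum. -/
theorem max_indep_iff [DecidableEq V] (hT : G.IsTree) {M : Finset (Sym2 V)}
    (hM : IsMaxMatching G M) {S : Finset V} (hS : S ∈ indepSets G) :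
    Fintype.card V + (Fintype.card V - 2 * M.card) = 2 * S.card ↔
      ∀ S' ∈ indepSets G, S'.card ≤ S.card := by
  have hb : ∀ S' ∈ indepSets G, S'.card + M.card ≤ Fintype.card V ∧
      2 * M.card + (Finset.univ.filter (fun v => ¬ Covers M v)).card = Fintype.card V :=
    fun S' hS' => exponent_bound hM.1 S' (by simpa [indepSets] using hS')
  obtain ⟨S₀, M₀, -, hS₀, hM₀, -, hc⟩ := exists_indep_add_matching hT Finset.univ
  rw [Finset.card_univ] at hc
  have h1 := hM.2 M₀ hM₀
  have h2 := hb S hS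
  constructor
  · intro h S' hS'
    have := hb S' hS'
    omega
  · intro h
    have := h S₀ (by simpa [indepSets] using hS₀)
    omega

end VersalCount

/-- The number of `F_q`-points of `X_T^{versal}` for a finite tree `T` on `t`
vertices with dimension `d = t - 2|M|` is `∑_S (q-1)^{t+d-2|S|} q^{|S|}`, the
sum running over independent sets `S` of `T`; and the number of summands whose
exponent `t + d - 2|S|` vanishes (the terms contributing `1` at `q = 1`, i.e.
the Euler characteristic of `X_T^{versal}`) equals the number of maximum
independent sets of `T`. -/
theorem card_versal_sum_over_indep {V : Type} [Fintype V] [DecidableEq V]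
    (G : SimpleGraph V) (hT : G.IsTree) (M : Finset (Sym2 V))
    (hM : IsMaxMatching G M) (F : Type) [Field F] [Fintype F] :
    Nat.card (VersalVariety G M F)
      = ∑ S ∈ indepSets G,
          (Fintype.card F - 1) ^
            (Fintype.card V + (Fintype.card V - 2 * M.card) - 2 * S.card) *
          Fintype.card F ^ S.card ∧
    ((indepSets G).filter
        (fun S => Fintype.card V + (Fintype.card V - 2 * M.card) = 2 * S.card)).card
      = ((indepSets G).filter
          (fun S => ∀ S' ∈ indepSets G, S'.card ≤ S.card)).card := by
  refine ⟨VersalCount.card_versal hT hM.1, congrArg Finset.card (Finset.filter_congr ?_)⟩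
  exact fun S hS => VersalCount.max_indep_iff hT hM hS
end
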